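/- Assume in addition that the sum g = g¹ + ⋯ + gˢ is direct (the family g¹,…,gˢ is independent). Then g = g¹ ⊕ h² ⊕ ⋯ ⊕ hˢ; that is, g is the internal direct sum of the subspaces g¹, h², …, hˢ. -/

import Mathlib

/-!
The two families agree above degree one: `G j = H j` for `2 ≤ j ≤ s`, which reduces both claims to
the corresponding facts about `G`.

The point is that bracketing with an element of `I` raises the degree inside the family `H`, i.e.
`[I, H j] ≤ H (j + 1)` (`complement_lie_mem`). For `j = 1` this is the hypothesis on `[I, G 1]`.
For larger `j`, the Jacobi identity `⁅i, ⁅h, x⁆⁆ = ⁅⁅i, h⁆, x⁆ + ⁅h, ⁅i, x⁆⁆` with `h ∈ H 1` and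
`x ∈ H j` reduces it to the inductive hypothesis and to `[H 2, H j] ≤ H (j + 2)`
(`two_lie_mem`). Since `G 1 = I + H 1`, then `[G 1, H j] = H (j + 1)` for `j ≥ 2`, while
`[G 1, G 1] = H 2` by antisymmetry of the bracket.
-/

/-- The subspace spanned by all brackets `⁅a, b⁆` with `a ∈ A`, `b ∈ B`. -/
def bracketSpan (𝕜 : Type*) {L : Type*} [Field 𝕜] [LieRing L] [LieAlgebra 𝕜 L]
    (A B : Submodule 𝕜 L) : Submodule 𝕜 L :=
  Submodule.span 𝕜 {x | ∃ a ∈ A, ∃ b ∈ B, x = ⁅a, b⁆}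

section
variable {𝕜 L : Type*} [Field 𝕜] [LieRing L] [LieAlgebra 𝕜 L]

lemma lie_mem_bracketSpan {A B : Submodule 𝕜 L} {a b : L} (ha : a ∈ A) (hb : b ∈ B) :
    ⁅a, b⁆ ∈ bracketSpan 𝕜 A B :=
  Submodule.subset_span ⟨a, ha, b, hb, rfl⟩

lemma bracketSpan_le_iff {A B C : Submodule 𝕜 L} :
    bracketSpan 𝕜 A B ≤ C ↔ ∀ a ∈ A, ∀ b ∈ B, ⁅a, b⁆ ∈ C := by
  refine ⟨fun h a ha b hb => h (lie_mem_bracketSpan ha hb), fun h => ?_⟩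
  refine Submodule.span_le.2 ?_
  rintro _ ⟨a, ha, b, hb, rfl⟩
  exact h a ha b hb

lemma lie_mem_of_mem_bracketSpan {A B C : Submodule 𝕜 L} {y z : L}
    (hz : z ∈ bracketSpan 𝕜 A B) (h : ∀ a ∈ A, ∀ b ∈ B, ⁅y, ⁅a, b⁆⁆ ∈ C) : ⁅y, z⁆ ∈ C := by
  have : bracketSpan 𝕜 A B ≤ C.comap (LieAlgebra.ad 𝕜 L y : L →ₗ[𝕜] L) :=
    bracketSpan_le_iff.2 fun a ha b hb => by simpa using h a ha b hb
  simpa using this hz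

lemma one_lie_mem {s : ℕ} {H : ℕ → Submodule 𝕜 L}
    (hH : ∀ j, 1 ≤ j → j ≤ s - 1 → H (j + 1) = bracketSpan 𝕜 (H 1) (H j))
    {j : ℕ} (hj : 1 ≤ j) (hjs : j + 1 ≤ s) {h x : L} (hh : h ∈ H 1) (hx : x ∈ H j) :
    ⁅h, x⁆ ∈ H (j + 1) := by
  rw [hH j hj (by omega)]
  exact lie_mem_bracketSpan hh hx

lemma two_lie_mem {s : ℕ} {H : ℕ → Submodule 𝕜 L}
    (hH : ∀ j, 1 ≤ j → j ≤ s - 1 → H (j + 1) = bracketSpan 𝕜 (H 1) (H j))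
    {j : ℕ} (hj : 1 ≤ j) (hjs : j + 2 ≤ s) {y x : L} (hy : y ∈ H 2) (hx : x ∈ H j) :
    ⁅y, x⁆ ∈ H (j + 2) := by
  rw [hH 1 le_rfl (by omega)] at hy
  rw [← lie_skew, neg_mem_iff]
  refine lie_mem_of_mem_bracketSpan hy fun a ha b hb => ?_
  rw [← lie_skew, neg_mem_iff, lie_lie]
  exact sub_mem
    (one_lie_mem hH (by omega) hjs ha (one_lie_mem hH hj (by omega) hb hx))
    (one_lie_mem hH (by omega) hjs hb (one_lie_mem hH hj (by omega) ha hx))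

/-- Bracketing with an element of `I` raises the degree in the family `H` by one. -/
lemma complement_lie_mem {s : ℕ} {H : ℕ → Submodule 𝕜 L}
    (hH : ∀ j, 1 ≤ j → j ≤ s - 1 → H (j + 1) = bracketSpan 𝕜 (H 1) (H j))
    {I : Submodule 𝕜 L} (hI : ∀ i ∈ I, ∀ h ∈ H 1, ⁅i, h⁆ ∈ H 2)
    {j : ℕ} (hj : 1 ≤ j) (hjs : j + 1 ≤ s) {i x : L} (hi : i ∈ I) (hx : x ∈ H j) :
    ⁅i, x⁆ ∈ H (j + 1) := by
  induction j, hj using Nat.le_induction generalizing x with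
  | base => exact hI i hi x hx
  | succ j hj ih =>
    rw [hH j hj (by omega)] at hx
    refine lie_mem_of_mem_bracketSpan hx fun a ha b hb => ?_
    rw [leibniz_lie]
    exact add_mem (two_lie_mem hH hj hjs (hI i hi a ha) hb)
      (one_lie_mem hH (by omega) hjs ha (ih (by omega) hb))

lemma eq_of_two_le {s : ℕ} {G H : ℕ → Submodule 𝕜 L}
    (hG : ∀ j, 1 ≤ j → j ≤ s - 1 → G (j + 1) = bracketSpan 𝕜 (G 1) (G j))
    (hH : ∀ j, 1 ≤ j → j ≤ s - 1 → H (j + 1) = bracketSpan 𝕜 (H 1) (H j))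
    {I : Submodule 𝕜 L} (hsup : I ⊔ H 1 = G 1) (hbr : bracketSpan 𝕜 I (G 1) ≤ H 2)
    {j : ℕ} (hj : 2 ≤ j) (hjs : j ≤ s) : G j = H j := by
  have hIG : I ≤ G 1 := hsup ▸ le_sup_left
  have hHG : H 1 ≤ G 1 := hsup ▸ le_sup_right
  have hI : ∀ i ∈ I, ∀ g ∈ G 1, ⁅i, g⁆ ∈ H 2 := bracketSpan_le_iff.1 hbr
  induction j, hj using Nat.le_induction with
  | base =>
    apply le_antisymm
    · rw [hG 1 le_rfl (by omega), bracketSpan_le_iff]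
      intro a ha b hb
      rw [← hsup] at ha
      obtain ⟨i, hi, h, hh, rfl⟩ := Submodule.mem_sup.1 ha
      rw [add_lie]
      refine add_mem (hI i hi b hb) ?_
      rw [← hsup] at hb
      obtain ⟨i', hi', h', hh', rfl⟩ := Submodule.mem_sup.1 hb
      rw [lie_add]
      refine add_mem ?_ (one_lie_mem hH le_rfl hjs hh hh')
      rw [← lie_skew, neg_mem_iff]
      exact hI i' hi' h (hHG hh)
    · rw [hH 1 le_rfl (by omega), bracketSpan_le_iff]
      exact fun a ha b hb => one_lie_mem hG le_rfl hjs (hHG ha) (hHG hb)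
  | succ j hj ih =>
    have ih := ih (by omega)
    apply le_antisymm
    · rw [hG j (by omega) (by omega), ih, bracketSpan_le_iff]
      intro a ha b hb
      rw [← hsup] at ha
      obtain ⟨i, hi, h, hh, rfl⟩ := Submodule.mem_sup.1 ha
      rw [add_lie]
      exact add_mem
        (complement_lie_mem hH (fun i hi h hh => hI i hi h (hHG hh)) (by omega) hjs hi hb)
        (one_lie_mem hH (by omega) hjs hh hb)
    · rw [hH j (by omega) (by omega), ← ih, bracketSpan_le_iff]
      exact fun a ha b hb => one_lie_mem hG (by omega) hjs (hHG ha) hb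

end

theorem stmt_2 {𝕜 L : Type*} [Field 𝕜] [CharZero 𝕜] [LieRing L] [LieAlgebra 𝕜 L]
    (s : ℕ) (hs : 2 ≤ s) (G H : ℕ → Submodule 𝕜 L)
    (hsum : (⨆ j ∈ Finset.Icc 1 s, G j) = ⊤)
    (hGindep :
      iSupIndep (fun j : (Finset.Icc 1 s : Finset ℕ) => G (j : ℕ)))
    (hG : ∀ j, 1 ≤ j → j ≤ s - 1 → G (j + 1) = bracketSpan 𝕜 (G 1) (G j))
    (hH : ∀ j, 1 ≤ j → j ≤ s - 1 → H (j + 1) = bracketSpan 𝕜 (H 1) (H j))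
    (I : Submodule 𝕜 L) (hIG : I ≤ G 1)
    (hsup : I ⊔ H 1 = G 1) (hinf : I ⊓ H 1 = ⊥)
    (hbr : bracketSpan 𝕜 I (G 1) ≤ H 2) :
    (G 1 ⊔ ⨆ j ∈ Finset.Icc 2 s, H j) = ⊤ ∧
      iSupIndep
        (fun j : (Finset.Icc 1 s : Finset ℕ) =>
          if (j : ℕ) = 1 then G 1 else H (j : ℕ)) := by
  have key : ∀ j, 2 ≤ j → j ≤ s → G j = H j := fun j h2 hjs =>
    eq_of_two_le hG hH hsup hbr h2 hjs
  constructor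
  · rw [eq_top_iff, ← hsum]
    refine iSup₂_le fun j hj => ?_
    obtain ⟨h1, hjs⟩ := Finset.mem_Icc.1 hj
    rcases h1.eq_or_lt with rfl | h2
    · exact le_sup_left
    · rw [key j h2 hjs]
      exact le_sup_of_le_right (le_iSup₂_of_le j (Finset.mem_Icc.2 ⟨h2, hjs⟩) le_rfl)
  · convert hGindep using 2 with j
    obtain ⟨h1, hjs⟩ := Finset.mem_Icc.1 j.2
    split_ifs with h
    · rw [h]
    · exact (key j (by omega) hjs).symm
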